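/- arXiv:1608.08746 — 4 statements merged into one kernel-verified Lean document; each statement's English description precedes it below -/
import Mathlib

section
/- Let V be a real vector space, let B = {e^1,…,e^h} be a finite linearly independent subset of V, and let U be a linear subspace of the dual space V* having property (E) with respect to the cone C(B). Then C(B) ∩ U^⊥ = C(B ∩ U^⊥), where U^⊥ = {w ∈ V : ⟨u, w⟩ = 0 for all u ∈ U}, and where C(B ∩ U^⊥) = {0} if B ∩ U^⊥ is empty. -/
/-- The cone of nonnegative real linear combinations of the family `e`. -/
def coneFam {V : Type*} [AddCommGroup V] [Module ℝ V] {h : ℕ} (e : Fin h → V) : Set V :=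
  {v | ∃ c : Fin h → ℝ, (∀ j, 0 ≤ c j) ∧ v = ∑ j, c j • e j}

/-- A subspace `U` of the dual of `V` has property (E) with respect to the cone `C(B)` of the
family `e` if `U` admits a basis `u_1, …, u_r` with `⟨u_i, e^j⟩ ≥ 0` for all `i, j`. -/
def HasPropertyE {V : Type*} [AddCommGroup V] [Module ℝ V]
    (U : Submodule ℝ (Module.Dual ℝ V)) {h : ℕ} (e : Fin h → V) : Prop :=
  ∃ (r : ℕ) (u : Fin r → Module.Dual ℝ V),
    LinearIndependent ℝ u ∧ Submodule.span ℝ (Set.range u) = U ∧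
      ∀ i j, 0 ≤ u i (e j)

/-!
A functional that is nonnegative on the generators kills a nonnegative combination `∑ j, c j • e j`
only if it kills every term `c j • e j`. Applying this to a spanning set of `U`, each generator with
`c j ≠ 0` is killed by that spanning set, hence by `U`.
-/

section NonnegFunctionals

variable {R M ι : Type*} [CommSemiring R] [PartialOrder R] [IsOrderedRing R] [NoZeroDivisors R]
  [AddCommMonoid M] [Module R M] [Fintype ι] {e : ι → M} {c : ι → R}

theorem map_sum_smul_eq_zero_iff_of_nonneg {f : Module.Dual R M} (hf : ∀ j, 0 ≤ f (e j))
    (hc : ∀ j, 0 ≤ c j) : f (∑ j, c j • e j) = 0 ↔ ∀ j, c j = 0 ∨ f (e j) = 0 := by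
  have hterm : ∀ j ∈ Finset.univ, 0 ≤ c j * f (e j) := fun j _ => mul_nonneg (hc j) (hf j)
  simp only [map_sum, map_smul, smul_eq_mul, Finset.sum_eq_zero_iff_of_nonneg hterm,
    Finset.mem_univ, forall_const, mul_eq_zero]

theorem sum_smul_mem_dualCoannihilator_span_iff_of_nonneg {S : Set (Module.Dual R M)}
    (hS : ∀ f ∈ S, ∀ j, 0 ≤ f (e j)) (hc : ∀ j, 0 ≤ c j) :
    ∑ j, c j • e j ∈ (Submodule.span R S).dualCoannihilator ↔
      ∀ j, e j ∉ (Submodule.span R S).dualCoannihilator → c j = 0 := by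
  have mem_iff (x : M) : x ∈ (Submodule.span R S).dualCoannihilator ↔ ∀ f ∈ S, f x = 0 :=
    Set.ext_iff.1 (Submodule.coe_dualCoannihilator_span S) x
  calc ∑ j, c j • e j ∈ (Submodule.span R S).dualCoannihilator
    _ ↔ ∀ f ∈ S, ∀ j, c j = 0 ∨ f (e j) = 0 := by
      rw [mem_iff]
      exact forall₂_congr fun f hf => map_sum_smul_eq_zero_iff_of_nonneg (hS f hf) hc
    _ ↔ ∀ j, e j ∉ (Submodule.span R S).dualCoannihilator → c j = 0 := by
      simp only [mem_iff]
      grind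

theorem stmt0_general (e : ι → M) (S : Set (Module.Dual R M)) (hS : ∀ f ∈ S, ∀ j, 0 ≤ f (e j)) :
    {v | ∃ c : ι → R, (∀ j, 0 ≤ c j) ∧ v = ∑ j, c j • e j} ∩
        {w : M | ∀ u ∈ Submodule.span R S, u w = 0} =
      {v | ∃ c : ι → R, (∀ j, 0 ≤ c j) ∧
        (∀ j, e j ∉ {w : M | ∀ u ∈ Submodule.span R S, u w = 0} → c j = 0) ∧
          v = ∑ j, c j • e j} := by
  have support_iff {c : ι → R} (hc : ∀ j, 0 ≤ c j) :=
    sum_smul_mem_dualCoannihilator_span_iff_of_nonneg hS hc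
  simp only [Submodule.mem_dualCoannihilator] at support_iff
  ext v
  constructor
  · rintro ⟨⟨c, hc, rfl⟩, hv⟩
    exact ⟨c, hc, (support_iff hc).1 hv, rfl⟩
  · rintro ⟨c, hc, hsupp, rfl⟩
    exact ⟨⟨c, hc, rfl⟩, (support_iff hc).2 hsupp⟩

end NonnegFunctionals

/-- Lemma 3.1: if `U` has property (E) with respect to `C(B)`, then
`C(B) ∩ U^⊥ = C(B ∩ U^⊥)`. -/
theorem stmt0 {V : Type*} [AddCommGroup V] [Module ℝ V] {h : ℕ} (e : Fin h → V)
    (hind : LinearIndependent ℝ e)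
    (U : Submodule ℝ (Module.Dual ℝ V)) (hE : HasPropertyE U e) :
    coneFam e ∩ {w : V | ∀ u ∈ U, u w = 0} =
      {v | ∃ c : Fin h → ℝ, (∀ j, 0 ≤ c j) ∧
        (∀ j, e j ∉ {w : V | ∀ u ∈ U, u w = 0} → c j = 0) ∧ v = ∑ j, c j • e j} := by
  obtain ⟨r, u, -, rfl, hpos⟩ := hE
  exact stmt0_general e (Set.range u) (Set.forall_mem_range.2 hpos)
end

section
/- Let Δ be a smooth fan in ℝ^n with respect to the lattice ℤ^n, let Γ be a subgroup of Hom(ℤ^n, ℤ), and suppose the subspace U = Γ ⊗ ℝ ⊆ Hom(ℝ^n, ℝ) has property (E) with respect to every cone of Δ. Set U^⊥ = {v ∈ ℝ^n : ⟨u, v⟩ = 0 for all u ∈ U}. Then: (1) for every cone C ∈ Δ, the relative interior of C is either entirely contained in U^⊥ or disjoint from U^⊥; (2) the collection Δ_H of all cones of Δ that are contained in U^⊥ is a smooth fan in U^⊥ with respect to the lattice ℤ^n ∩ U^⊥; in particular the integral generators of each cone of Δ_H span a direct summand of the lattice ℤ^n ∩ U^⊥. -/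
/-- The canonical embedding of `ℤ^n` into `ℝ^n`. -/
noncomputable def toR {n : ℕ} (x : Fin n → ℤ) : Fin n → ℝ := fun i => (x i : ℝ)

/-- The cone of nonnegative real linear combinations of the finite set `s` of integer
vectors. -/
noncomputable def coneOf {n : ℕ} (s : Finset (Fin n → ℤ)) : Set (Fin n → ℝ) :=
  {v | ∃ c : (Fin n → ℤ) → ℝ, (∀ x, 0 ≤ c x) ∧ v = ∑ x ∈ s, c x • toR x}

/-- The relative interior of the cone generated by `s`: strictly positive combinations of the
generators. -/
noncomputable def relIntOf {n : ℕ} (s : Finset (Fin n → ℤ)) : Set (Fin n → ℝ) :=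
  {v | ∃ c : (Fin n → ℤ) → ℝ, (∀ x ∈ s, 0 < c x) ∧ v = ∑ x ∈ s, c x • toR x}

/-- A smooth fan in `ℝ^n` with respect to the lattice `ℤ^n`: a finite collection of cones,
each recorded by its finite set of integral generators, such that the generators of each cone
are linearly independent and span a direct summand of `ℤ^n`, the collection is closed under
taking faces (subsets of the generators), and the intersection of any two cones of the fan is
a face of each of them. -/
def IsSmoothFan {n : ℕ} (Δ : Finset (Finset (Fin n → ℤ))) : Prop :=
  (∀ s ∈ Δ, LinearIndependent ℝ (fun x : s => toR (x : Fin n → ℤ))) ∧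
  (∀ s ∈ Δ, ∃ P : Submodule ℤ (Fin n → ℤ),
      IsCompl (Submodule.span ℤ (s : Set (Fin n → ℤ))) P) ∧
  (∀ s ∈ Δ, ∀ t ⊆ s, t ∈ Δ) ∧
  (∀ s ∈ Δ, ∀ t ∈ Δ,
      (∃ u ⊆ s, coneOf s ∩ coneOf t = coneOf u) ∧
      (∃ u ⊆ t, coneOf s ∩ coneOf t = coneOf u))

/-- A subspace `U ⊆ Hom(ℝ^n, ℝ) = ℝ^n` has property (E) with respect to the cone generated by
`s`: `U` admits a basis `u_1, …, u_r` pairing nonnegatively with every generator of `s`. -/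
def SubspacePropE {n : ℕ} (U : Submodule ℝ (Fin n → ℝ)) (s : Finset (Fin n → ℤ)) : Prop :=
  ∃ (r : ℕ) (u : Fin r → Fin n → ℝ), LinearIndependent ℝ u ∧
    Submodule.span ℝ (Set.range u) = U ∧ ∀ i, ∀ x ∈ s, 0 ≤ ∑ k, u i k * (x k : ℝ)

/-- A smooth fan inside the subspace cut out by `U^⊥`, with respect to the sublattice
`L = ℤ^n ∩ U^⊥`: a finite collection of cones whose generators lie in `L`, are linearly
independent and span a direct summand of `L`, closed under faces, and such that the
intersection of two of its cones is a face of each of them. -/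
def IsSmoothFanIn {n : ℕ} (L : Set (Fin n → ℤ)) (Δ' : Set (Finset (Fin n → ℤ))) : Prop :=
  Δ'.Finite ∧
  (∀ s ∈ Δ', (s : Set (Fin n → ℤ)) ⊆ L) ∧
  (∀ s ∈ Δ', LinearIndependent ℝ (fun x : s => toR (x : Fin n → ℤ))) ∧
  (∀ s ∈ Δ', ∃ P : Submodule ℤ (Fin n → ℤ), (P : Set (Fin n → ℤ)) ⊆ L ∧
      Submodule.span ℤ (s : Set (Fin n → ℤ)) ⊓ P = ⊥ ∧
      ∀ x, x ∈ L ↔ x ∈ Submodule.span ℤ (s : Set (Fin n → ℤ)) ⊔ P) ∧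
  (∀ s ∈ Δ', ∀ t ⊆ s, t ∈ Δ') ∧
  (∀ s ∈ Δ', ∀ t ∈ Δ',
      (∃ u ∈ Δ', u ⊆ s ∧ coneOf s ∩ coneOf t = coneOf u) ∧
      (∃ u ∈ Δ', u ⊆ t ∧ coneOf s ∩ coneOf t = coneOf u))

/-!
Property (E) provides functionals `u_i` spanning `U` that are nonnegative on all generators `e^j` of
a cone. If a strictly positive combination `∑ c_j e^j` lies in `U^⊥`, then `∑ c_j ⟨u_i, e^j⟩ = 0`
has nonnegative terms, so every `⟨u_i, e^j⟩` vanishes and the whole cone lies in `U^⊥`.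

That the cones inside `U^⊥` form a smooth fan holds for any subspace `V` in place of `U^⊥`: a cone
lies in `V` iff its generators do, which passes to faces, and if `ℤ^n = N ⊕ P` with `N ⊆ V`, then
the modular law gives `ℤ^n ∩ V = N ⊕ (P ∩ V)`.
-/

theorem map_eq_zero_of_map_sum_smul_eq_zero {ι R M : Type*} [CommRing R] [LinearOrder R]
    [IsStrictOrderedRing R] [AddCommGroup M] [Module R M] (f : M →ₗ[R] R) {s : Finset ι}
    {c : ι → R} {e : ι → M} (hc : ∀ i ∈ s, 0 < c i) (he : ∀ i ∈ s, 0 ≤ f (e i))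
    (hsum : f (∑ i ∈ s, c i • e i) = 0) : ∀ i ∈ s, f (e i) = 0 := by
  have hterms : ∀ i ∈ s, c i * f (e i) = 0 := by
    rw [← Finset.sum_eq_zero_iff_of_nonneg fun i hi => mul_nonneg (hc i hi).le (he i hi)]
    simpa only [map_sum, map_smul, smul_eq_mul] using hsum
  exact fun i hi => (mul_eq_zero.1 (hterms i hi)).resolve_left (hc i hi).ne'

theorem inf_inf_eq_bot_and_sup_inf_eq_of_isCompl {α : Type*} [Lattice α] [BoundedOrder α]
    [IsModularLattice α] {a b c : α} (hab : IsCompl a b) (hac : a ≤ c) :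
    a ⊓ (b ⊓ c) = ⊥ ∧ a ⊔ b ⊓ c = c :=
  ⟨(hab.disjoint.mono_right inf_le_left).eq_bot,
    by rw [← sup_inf_assoc_of_le b hac, hab.sup_eq_top, top_inf_eq]⟩

/-- The orthogonal complement `U^⊥` with respect to the dot product, which identifies
`Hom(ℝ^n, ℝ)` with `ℝ^n`. -/
abbrev dotPerp {n : ℕ} (U : Submodule ℝ (Fin n → ℝ)) : Submodule ℝ (Fin n → ℝ) :=
  U.orthogonalBilin (dotProductBilin ℝ ℝ)

/-- The lattice `ℤ^n ∩ V` of integral points of a subspace `V`, as the preimage of `V` under the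
embedding `toR` viewed as a `ℤ`-linear map. -/
def latticePoints {n : ℕ} (V : Submodule ℝ (Fin n → ℝ)) : Submodule ℤ (Fin n → ℤ) :=
  (V.restrictScalars ℤ).comap ((Int.castAddHom ℝ).toIntLinearMap.compLeft (Fin n))

section

variable {n : ℕ} {s : Finset (Fin n → ℤ)}

theorem mem_dotPerp_span_range {ι : Type*} {u : ι → Fin n → ℝ} {v : Fin n → ℝ} :
    v ∈ dotPerp (Submodule.span ℝ (Set.range u)) ↔ ∀ i, u i ⬝ᵥ v = 0 := by
  have hker : v ∈ dotPerp (Submodule.span ℝ (Set.range u)) ↔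
      Submodule.span ℝ (Set.range u) ≤ ((dotProductBilin ℝ ℝ).flip v).ker :=
    Iff.rfl
  rw [hker, Submodule.span_le, Set.range_subset_iff]
  exact Iff.rfl

theorem toR_mem_coneOf {x : Fin n → ℤ} (hx : x ∈ s) : toR x ∈ coneOf s := by
  classical
  refine ⟨Pi.single x 1, fun y => ?_, ?_⟩
  · exact (Pi.single_nonneg.2 zero_le_one : (0 : (Fin n → ℤ) → ℝ) ≤ Pi.single x 1) y
  · simp [Pi.single_apply, hx]

theorem coneOf_subset_iff {V : Submodule ℝ (Fin n → ℝ)} :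
    coneOf s ⊆ V ↔ ∀ x ∈ s, toR x ∈ V := by
  refine ⟨fun h x hx => h (toR_mem_coneOf hx), ?_⟩
  rintro h _ ⟨c, -, rfl⟩
  exact V.sum_mem fun x hx => V.smul_mem _ (h x hx)

theorem relIntOf_subset_of_forall_toR_mem {V : Submodule ℝ (Fin n → ℝ)}
    (h : ∀ x ∈ s, toR x ∈ V) : relIntOf s ⊆ V := by
  rintro _ ⟨c, -, rfl⟩
  exact V.sum_mem fun x hx => V.smul_mem _ (h x hx)

namespace SubspacePropE

variable {U : Submodule ℝ (Fin n → ℝ)}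

theorem toR_mem_dotPerp (hE : SubspacePropE U s) {v : Fin n → ℝ} (hv : v ∈ relIntOf s)
    (hvU : v ∈ dotPerp U) : ∀ x ∈ s, toR x ∈ dotPerp U := by
  obtain ⟨r, u, -, rfl, hnonneg⟩ := hE
  obtain ⟨c, hc, rfl⟩ := hv
  intro x hx
  rw [mem_dotPerp_span_range] at hvU ⊢
  exact fun i => map_eq_zero_of_map_sum_smul_eq_zero (dotProductBilin ℝ ℝ (u i)) hc (hnonneg i)
    (hvU i) x hx

theorem relIntOf_subset_or_inter_eq_empty (hE : SubspacePropE U s) :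
    relIntOf s ⊆ dotPerp U ∨ relIntOf s ∩ dotPerp U = ∅ := by
  rcases Set.eq_empty_or_nonempty (relIntOf s ∩ dotPerp U) with hempty | ⟨v, hv, hvU⟩
  · exact Or.inr hempty
  · exact Or.inl (relIntOf_subset_of_forall_toR_mem (hE.toR_mem_dotPerp hv hvU))

end SubspacePropE

theorem IsSmoothFan.isSmoothFanIn_latticePoints {Δ : Finset (Finset (Fin n → ℤ))}
    (hΔ : IsSmoothFan Δ) (V : Submodule ℝ (Fin n → ℝ)) :
    IsSmoothFanIn (latticePoints V : Set (Fin n → ℤ)) {s | s ∈ Δ ∧ coneOf s ⊆ V} := by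
  obtain ⟨hindep, hsummand, hface, hinter⟩ := hΔ
  have hfaceV : ∀ s ∈ Δ, coneOf s ⊆ V → ∀ t ⊆ s, t ∈ Δ ∧ coneOf t ⊆ V := fun s hs hsV t hts =>
    ⟨hface s hs t hts, coneOf_subset_iff.2 fun x hx => coneOf_subset_iff.1 hsV x (hts hx)⟩
  refine ⟨Δ.finite_toSet.subset fun s hs => hs.1, fun s hs => coneOf_subset_iff.1 hs.2,
    fun s hs => hindep s hs.1, ?_, fun s hs => hfaceV s hs.1 hs.2, ?_⟩
  · rintro s ⟨hs, hsV⟩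
    obtain ⟨P, hP⟩ := hsummand s hs
    have hle : Submodule.span ℤ (s : Set (Fin n → ℤ)) ≤ latticePoints V :=
      Submodule.span_le.2 (coneOf_subset_iff.1 hsV)
    obtain ⟨hinf, hsup⟩ := inf_inf_eq_bot_and_sup_inf_eq_of_isCompl hP hle
    exact ⟨P ⊓ latticePoints V, inf_le_right, hinf, fun x => by rw [hsup, SetLike.mem_coe]⟩
  · rintro s ⟨hs, hsV⟩ t ⟨ht, htV⟩
    obtain ⟨⟨a, has, ha⟩, ⟨b, hbt, hb⟩⟩ := hinter s hs t ht
    exact ⟨⟨a, hfaceV s hs hsV a has, has, ha⟩, ⟨b, hfaceV t ht htV b hbt, hbt, hb⟩⟩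

end

theorem stmt6_general {n : ℕ} (Δ : Finset (Finset (Fin n → ℤ))) (hΔ : IsSmoothFan Δ)
    (U : Submodule ℝ (Fin n → ℝ)) (hE : ∀ s ∈ Δ, SubspacePropE U s) :
    (∀ s ∈ Δ, relIntOf s ⊆ dotPerp U ∨ relIntOf s ∩ dotPerp U = ∅) ∧
    IsSmoothFanIn {x : Fin n → ℤ | toR x ∈ dotPerp U}
      {s : Finset (Fin n → ℤ) | s ∈ Δ ∧ coneOf s ⊆ dotPerp U} :=
  ⟨fun s hs => (hE s hs).relIntOf_subset_or_inter_eq_empty,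
    hΔ.isSmoothFanIn_latticePoints (dotPerp U)⟩

/-- Proposition 3.6: if `Δ` is a smooth fan and the real span `U` of a subgroup `Γ` of
`Hom(ℤ^n, ℤ)` has property (E) with respect to every cone of `Δ`, then (1) the relative
interior of every cone of `Δ` is entirely contained in `U^⊥` or disjoint from it, and (2) the
cones of `Δ` contained in `U^⊥` form a smooth fan in `U^⊥` with respect to the lattice
`ℤ^n ∩ U^⊥`; in particular the generators of each such cone span a direct summand of
`ℤ^n ∩ U^⊥`. -/
theorem stmt6 {n : ℕ} (Δ : Finset (Finset (Fin n → ℤ))) (hΔ : IsSmoothFan Δ)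
    (Γ : Submodule ℤ (Fin n → ℤ))
    (U : Submodule ℝ (Fin n → ℝ))
    (hU : U = Submodule.span ℝ (toR '' (Γ : Set (Fin n → ℤ))))
    (hE : ∀ s ∈ Δ, SubspacePropE U s) :
    let perp : Set (Fin n → ℝ) := {v | ∀ u ∈ U, ∑ k, u k * v k = 0}
    (∀ s ∈ Δ, relIntOf s ⊆ perp ∨ relIntOf s ∩ perp = ∅) ∧
    IsSmoothFanIn {x : Fin n → ℤ | toR x ∈ perp}
      {s : Finset (Fin n → ℤ) | s ∈ Δ ∧ coneOf s ⊆ perp} :=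
  stmt6_general Δ hΔ U hE
end

section
/- Let r ≤ n, let A = (m_{i,j}) be an n×r matrix of nonnegative integers of rank r, and let b_1,…,b_r be nonzero complex numbers. For j = 1,…,r define the polynomial p_j = x_1^{m_{1,j}} ⋯ x_n^{m_{n,j}} − b_j in ℂ[x_1,…,x_n]. Then at every point t ∈ ℂ^n with p_1(t) = ⋯ = p_r(t) = 0, the Jacobian matrix ((∂p_j/∂x_i)(t))_{i,j} has rank r. -/
open MvPolynomial

/-!
By Euler's identity `x_i ∂_i x^a = a_i x^a`, the Jacobian matrix `J` of the monomials satisfies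
`diag(t) J = A diag(b)` at a common zero `t`. If `t_i = 0`, then `m_{i,j} = 0` for all `j`, because
`b_j ≠ 0`, and so row `i` vanishes in `J` as well as in `A`. Hence also `J = diag(t)⁻¹ A diag(b)`,
with `0⁻¹ = 0`, and the two identities bound the ranks of `J` and `A` by each other. Finally, the
rank of `A` is unchanged by passing from `ℚ` to a larger field.
-/

section ExtensionOfScalars

variable {m : Type*}

theorem span_range_algebraMap_comp {K L ι : Type*} [CommSemiring K] [Semiring L] [Algebra K L]
    (v : ι → m → K) :
    Submodule.span L (Set.range fun i => algebraMap K L ∘ v i) = Submodule.span L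
      ((Submodule.span K (Set.range v)).map ((Algebra.linearMap K L).compLeft m) :
        Set (m → L)) := by
  rw [Submodule.map_span, Submodule.span_span_of_tower, ← Set.range_comp]
  rfl

variable {K L : Type*} [Field K] [Field L] [Algebra K L] [Finite m]

theorem finrank_span_range_algebraMap_comp {ι : Type*} (v : ι → m → K) :
    Module.finrank L (Submodule.span L (Set.range fun i => algebraMap K L ∘ v i)) =
      Module.finrank K (Submodule.span K (Set.range v)) := by
  obtain ⟨κ, a, -, span_eq, independent⟩ := exists_linearIndependent' K v
  have := independent.finite
  have := Fintype.ofFinite κ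
  have independent_map : LinearIndependent L fun k => algebraMap K L ∘ (v ∘ a) k :=
    linearIndependent_algebraMap_comp_iff.2 independent
  rw [span_range_algebraMap_comp, ← span_eq, ← span_range_algebraMap_comp,
    finrank_span_eq_card independent_map, finrank_span_eq_card independent]

theorem rank_map_algebraMap {n : Type*} [Fintype n] (A : Matrix m n K) :
    (A.map (algebraMap K L)).rank = A.rank := by
  rw [Matrix.rank_eq_finrank_span_cols, Matrix.rank_eq_finrank_span_cols]
  exact finrank_span_range_algebraMap_comp A.col

end ExtensionOfScalars

section Monomials

variable {σ R K : Type*} [Fintype σ] [CommSemiring R] [Field K]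

theorem X_mul_pderiv_prod_X_pow (a : σ → ℕ) (i : σ) :
    X i * pderiv i (∏ k, X k ^ a k : MvPolynomial σ R) = a i • ∏ k, X k ^ a k := by
  rw [prod_X_pow, X_mul_pderiv_monomial, Finsupp.indicator_of_mem (Finset.mem_univ i)]

theorem pderiv_prod_X_pow_of_eq_zero {a : σ → ℕ} {i : σ}
    (h : a i = 0) : pderiv i (∏ k, X k ^ a k : MvPolynomial σ R) = 0 := by
  rw [prod_X_pow, pderiv_monomial, Finsupp.indicator_of_mem (Finset.mem_univ i), h, Nat.cast_zero,
    mul_zero, monomial_zero]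

theorem mul_eval_pderiv_prod_X_pow (t : σ → R) (a : σ → ℕ) (i : σ) :
    t i * eval t (pderiv i (∏ k, X k ^ a k)) = a i * ∏ k, t k ^ a k := by
  simpa using congrArg (eval t) (X_mul_pderiv_prod_X_pow (R := R) a i)

theorem eval_pderiv_prod_X_pow_of_ne_zero {t : σ → K} {a : σ → ℕ}
    (h : ∏ k, t k ^ a k ≠ 0) (i : σ) :
    eval t (pderiv i (∏ k, X k ^ a k)) = (t i)⁻¹ * (a i * ∏ k, t k ^ a k) := by
  by_cases ti_zero : t i = 0
  · have ai_zero : a i = 0 := by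
      by_contra ai_ne_zero
      exact h (Finset.prod_eq_zero (Finset.mem_univ i) (by rw [ti_zero, zero_pow ai_ne_zero]))
    simp [pderiv_prod_X_pow_of_eq_zero ai_zero, ti_zero]
  · rw [← mul_eval_pderiv_prod_X_pow, inv_mul_cancel_left₀ ti_zero]

theorem rank_eval_pderiv_prod_X_pow {ι : Type*} [Fintype ι] (m : σ → ι → ℕ) {t : σ → K}
    (h : ∀ j, ∏ i, t i ^ m i j ≠ 0) :
    (Matrix.of fun i j => eval t (pderiv i (∏ k, X k ^ m k j))).rank =
      (Matrix.of fun i j => (m i j : K)).rank := by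
  classical
  set J := Matrix.of fun i j => eval t (pderiv i (∏ k, X k ^ m k j))
  set A := Matrix.of fun i j => (m i j : K)
  set D := Matrix.diagonal fun j => ∏ i, t i ^ m i j
  have diagonal_mul_J : Matrix.diagonal t * J = A * D := by
    ext i j
    rw [Matrix.diagonal_mul, Matrix.mul_diagonal]
    exact mul_eval_pderiv_prod_X_pow t (m · j) i
  have J_eq : J = Matrix.diagonal t⁻¹ * (A * D) := by
    ext i j
    rw [Matrix.diagonal_mul, Matrix.mul_diagonal]
    exact eval_pderiv_prod_X_pow_of_ne_zero (h j) i
  have rank_mul_D : (A * D).rank = A.rank := by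
    refine Matrix.rank_mul_eq_left_of_det_ne_zero D A ?_
    rw [Matrix.det_diagonal]
    exact Finset.prod_ne_zero_iff.2 fun j _ => h j
  rw [← rank_mul_D]
  apply le_antisymm
  · rw [J_eq]
    exact Matrix.rank_mul_le_right _ _
  · rw [← diagonal_mul_J]
    exact Matrix.rank_mul_le_right _ _

end Monomials

theorem stmt7_general {σ ι K : Type*} [Fintype σ] [Fintype ι] [Field K] [CharZero K]
    (m : σ → ι → ℕ) (b : ι → K) (hb : ∀ j, b j ≠ 0)
    (p : ι → MvPolynomial σ K) (hp : ∀ j, p j = (∏ i, X i ^ m i j) - C (b j))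
    (t : σ → K) (ht : ∀ j, eval t (p j) = 0) :
    (Matrix.of fun i j => eval t (pderiv i (p j))).rank =
      (Matrix.of fun i j => (m i j : ℚ)).rank := by
  have prod_ne_zero (j : ι) : ∏ i, t i ^ m i j ≠ 0 := by
    have prod_eq : ∏ i, t i ^ m i j = b j := by simpa [hp, sub_eq_zero] using ht j
    exact prod_eq ▸ hb j
  calc (Matrix.of fun i j => eval t (pderiv i (p j))).rank
      = (Matrix.of fun i j => eval t (pderiv i (∏ k, X k ^ m k j))).rank := by
        simp only [hp, map_sub, pderiv_C, sub_zero]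
    _ = (Matrix.of fun i j => (m i j : K)).rank := rank_eval_pderiv_prod_X_pow m prod_ne_zero
    _ = ((Matrix.of fun i j => (m i j : ℚ)).map (algebraMap ℚ K)).rank := by
        congr 1
        ext i j
        simp
    _ = (Matrix.of fun i j => (m i j : ℚ)).rank := rank_map_algebraMap _

/-- If `A = (m_{i,j})` is an `n × r` matrix of nonnegative integers of rank `r ≤ n` and
`b_1, …, b_r` are nonzero complex numbers, then at every common zero `t` of the polynomials
`p_j = x_1^{m_{1,j}} ⋯ x_n^{m_{n,j}} − b_j` the Jacobian matrix `(∂p_j/∂x_i)(t)` has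
rank `r`. -/
theorem stmt7 {n r : ℕ} (hrn : r ≤ n) (m : Fin n → Fin r → ℕ)
    (hrank : (Matrix.of fun i j => (m i j : ℚ)).rank = r)
    (b : Fin r → ℂ) (hb : ∀ j, b j ≠ 0)
    (p : Fin r → MvPolynomial (Fin n) ℂ)
    (hp : ∀ j, p j = (∏ i, X i ^ m i j) - C (b j))
    (t : Fin n → ℂ) (ht : ∀ j, eval t (p j) = 0) :
    (Matrix.of fun i j => eval t (pderiv i (p j))).rank = r :=
  (stmt7_general m b hb p hp t ht).trans hrank
end

section
/- Let Δ be a smooth fan in ℝ^n with respect to the lattice ℤ^n, let χ ∈ Hom(ℤ^n, ℤ), and suppose Δ^{(2)}_N ≠ ∅. Choose σ = C(e^1, e^2) ∈ Δ^{(2)}_N such that P_Δ(σ) = (M_σ, ε_σ) is maximum with respect to the lexicographic order on ℕ × {0,1}. Then: (1) if ε_σ = 1, the set (_σΔ)^{(2)}_N of bad two-dimensional cones of the elementary stellar subdivision _σΔ equals Δ^{(2)}_N \ {σ}; (2) if ε_σ = 0, then every τ ∈ (_σΔ)^{(2)}_N satisfies P_{_σΔ}(τ) ≤ (M_σ, ε_σ)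 in the lexicographic order, and the number of cones τ ∈ (_σΔ)^{(2)}_N with P_{_σΔ}(τ) = (M_σ, ε_σ) is strictly smaller than the number of cones σ' ∈ Δ^{(2)}_N with P_Δ(σ') = (M_σ, ε_σ). -/
/-- The elementary stellar subdivision `_CΔ` of `Δ` along the two dimensional cone
`C = C(e^1, e^2)`. -/
def stellar {n : ℕ} (Δ : Finset (Finset (Fin n → ℤ))) (e1 e2 : Fin n → ℤ) :
    Finset (Finset (Fin n → ℤ)) :=
  Δ.filter (fun s => ¬ ({e1, e2} : Finset (Fin n → ℤ)) ⊆ s) ∪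
    (Δ.filter (fun s => ({e1, e2} : Finset (Fin n → ℤ)) ⊆ s)).biUnion
      (fun s => (insert (e1 + e2) (s.erase e2)).powerset ∪
        (insert (e1 + e2) (s.erase e1)).powerset)

/-- The evaluation pairing `⟨χ, η⟩ = ∑ i, χ i * η i` identifying `Hom(ℤ^n, ℤ)` with `ℤ^n`. -/
def dotZ {n : ℕ} (χ η : Fin n → ℤ) : ℤ := ∑ i, χ i * η i

/-- For a two dimensional cone `σ = C(η^1, η^2)` (recorded as the two element set of its
primitive generators), `Mval χ σ = max(|⟨χ, η^1⟩|, |⟨χ, η^2⟩|)`. -/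
def Mval {n : ℕ} (χ : Fin n → ℤ) (s : Finset (Fin n → ℤ)) : ℕ :=
  s.sup (fun η => (dotZ χ η).natAbs)

/-- `epsval χ σ = 1` if all generators of `σ` attain the maximal absolute pairing `Mval χ σ`,
and `0` otherwise. -/
def epsval {n : ℕ} (χ : Fin n → ℤ) (s : Finset (Fin n → ℤ)) : ℕ :=
  if ∀ η ∈ s, (dotZ χ η).natAbs = Mval χ s then 1 else 0

/-- `Pval χ σ = (M_σ, ε_σ)`. -/
def Pval {n : ℕ} (χ : Fin n → ℤ) (s : Finset (Fin n → ℤ)) : ℕ × ℕ :=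
  (Mval χ s, epsval χ s)

/-- The lexicographic order on pairs. -/
def lexLe (a b : ℕ × ℕ) : Prop := a.1 < b.1 ∨ (a.1 = b.1 ∧ a.2 ≤ b.2)

/-- A two dimensional cone `σ = C(η^1, η^2)` is bad for `χ` if `χ` does not have property (E)
with respect to it, i.e. `⟨χ, η^1⟩⟨χ, η^2⟩ < 0`. -/
def badCone {n : ℕ} (χ : Fin n → ℤ) (s : Finset (Fin n → ℤ)) : Prop :=
  s.card = 2 ∧ (∏ η ∈ s, dotZ χ η) < 0

instance {n : ℕ} (χ : Fin n → ℤ) (s : Finset (Fin n → ℤ)) : Decidable (badCone χ s) := by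
  unfold badCone; infer_instance

/-!
Write `a = ⟨χ, e¹⟩` and `b = ⟨χ, e²⟩`, two integers of opposite signs. A new two-dimensional cone
is `C(e¹ + e², w)` with both `C(e¹, w)` and `C(e², w)` in `Δ`, and
`|a + b| < M_σ` because the signs cancel. If `|a| = |b|`, then `a + b = 0` and the new cone is not
bad. If, say, `|b| < |a| = M_σ`, then `a + b` has the sign of `a`, so if the new cone is bad then so
is `C(e¹, w)`; maximality of `P(σ) = (|a|, 0)` then forces `|⟨χ, w⟩| < |a|`. Hence every new bad
cone has `M < M_σ`, while `σ` itself has disappeared.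
-/

section OppositeSigns

variable {R : Type*} [Ring R] [LinearOrder R] [IsStrictOrderedRing R] {a b c : R}

theorem abs_add_lt_max_abs_of_mul_neg (hab : a * b < 0) : |a + b| < max |a| |b| := by
  rcases mul_neg_iff.mp hab with ⟨ha, hb⟩ | ⟨ha, hb⟩
  · rw [abs_of_pos ha, abs_of_neg hb]
    exact max_lt_max (add_lt_of_neg_right a hb) (neg_lt_neg (lt_add_of_pos_left b ha))
  · rw [max_comm, abs_of_neg ha, abs_of_pos hb]
    exact max_lt_max (add_lt_of_neg_left b ha) (neg_lt_neg (lt_add_of_pos_right a hb))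

theorem mul_neg_of_add_mul_neg (hba : |b| < |a|) (h : (a + b) * c < 0) : a * c < 0 := by
  rcases mul_neg_iff.mp h with ⟨hadd, hc⟩ | ⟨hadd, hc⟩
  · refine mul_neg_of_pos_of_neg ?_ hc
    by_contra! ha
    rw [abs_of_nonpos ha] at hba
    exact hadd.not_gt (lt_neg_iff_add_neg'.mp (lt_of_abs_lt hba))
  · refine mul_neg_of_neg_of_pos ?_ hc
    by_contra! ha
    rw [abs_of_nonneg ha] at hba
    exact hadd.not_gt (neg_lt_iff_pos_add'.mp (neg_lt_of_abs_lt hba))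

theorem add_eq_zero_of_abs_eq_of_mul_neg (h : |a| = |b|) (hab : a * b < 0) : a + b = 0 := by
  rcases abs_eq_abs.mp h with rfl | rfl
  · exact absurd hab (mul_self_nonneg a).not_gt
  · exact neg_add_cancel b

end OppositeSigns

section StellarSubdivision

variable {n : ℕ} {Δ : Finset (Finset (Fin n → ℤ))} {e1 e2 : Fin n → ℤ} {τ : Finset (Fin n → ℤ)}

theorem mem_stellar :
    τ ∈ stellar Δ e1 e2 ↔ (τ ∈ Δ ∧ ¬ {e1, e2} ⊆ τ) ∨ ∃ s ∈ Δ, {e1, e2} ⊆ s ∧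
      (τ ⊆ insert (e1 + e2) (s.erase e2) ∨ τ ⊆ insert (e1 + e2) (s.erase e1)) := by
  simp only [stellar, Finset.mem_union, Finset.mem_filter, Finset.mem_biUnion,
    Finset.mem_powerset, and_assoc]

theorem mem_or_union_erase_mem_of_mem_stellar (hΔ : IsLowerSet (Δ : Set (Finset (Fin n → ℤ))))
    (hτ : τ ∈ stellar Δ e1 e2) :
    (τ ∈ Δ ∧ ¬ {e1, e2} ⊆ τ) ∨
      (e1 + e2 ∈ τ ∧ {e1, e2} ∪ τ.erase (e1 + e2) ∈ Δ) := by
  rcases mem_stellar.mp hτ with hold | ⟨s, hs, hσs, hτs⟩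
  · exact Or.inl hold
  obtain ⟨e, heσ, hτe⟩ : ∃ e ∈ ({e1, e2} : Finset _), τ ⊆ insert (e1 + e2) (s.erase e) := by
    simpa [or_comm] using hτs
  by_cases hmem : e1 + e2 ∈ τ
  · have hface : τ.erase (e1 + e2) ⊆ s :=
      (Finset.subset_insert_iff.mp hτe).trans (s.erase_subset e)
    exact Or.inr ⟨hmem, hΔ (Finset.union_subset hσs hface) hs⟩
  · have hface : τ ⊆ s.erase e := (Finset.subset_insert_iff_of_notMem hmem).mp hτe
    exact Or.inl ⟨hΔ (hface.trans (s.erase_subset e)) hs,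
      fun hστ => s.notMem_erase e (hface (hστ heσ))⟩

theorem mem_or_eq_pair_of_mem_stellar (hΔ : IsLowerSet (Δ : Set (Finset (Fin n → ℤ))))
    (hτ : τ ∈ stellar Δ e1 e2) (hcard : τ.card = 2) :
    (τ ∈ Δ ∧ τ ≠ {e1, e2}) ∨ ∃ w, τ = {e1 + e2, w} ∧ {e1, w} ∈ Δ ∧ {e2, w} ∈ Δ := by
  rcases mem_or_union_erase_mem_of_mem_stellar hΔ hτ with ⟨hτΔ, hστ⟩ | ⟨hmem, hjoin⟩
  · exact Or.inl ⟨hτΔ, fun h => hστ h.ge⟩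
  · obtain ⟨w, hw⟩ : ∃ w, τ.erase (e1 + e2) = {w} := by
      rw [← Finset.card_eq_one, Finset.card_erase_of_mem hmem, hcard]
    rw [hw] at hjoin
    refine Or.inr ⟨w, ?_, hΔ ?_ hjoin, hΔ ?_ hjoin⟩
    · rw [← hw, Finset.insert_erase hmem]
    · simp [Finset.insert_subset_iff]
    · simp

theorem mem_stellar_of_card_le (hτ : τ ∈ Δ) (hcard : τ.card ≤ ({e1, e2} : Finset _).card)
    (hne : τ ≠ {e1, e2}) : τ ∈ stellar Δ e1 e2 :=
  mem_stellar.mpr <| Or.inl ⟨hτ, fun h => hne (Finset.eq_of_subset_of_card_le h hcard).symm⟩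

end StellarSubdivision

section TwoDimensionalCones

variable {n : ℕ} {χ x y w : Fin n → ℤ}

theorem dotZ_add (χ x y : Fin n → ℤ) : dotZ χ (x + y) = dotZ χ x + dotZ χ y :=
  dotProduct_add χ x y

theorem Mval_pair (χ x y : Fin n → ℤ) :
    Mval χ {x, y} = max (dotZ χ x).natAbs (dotZ χ y).natAbs := by
  simp [Mval]

theorem epsval_pair_eq_one_iff :
    epsval χ {x, y} = 1 ↔ (dotZ χ x).natAbs = (dotZ χ y).natAbs := by
  simp only [epsval, Mval_pair, Finset.mem_insert, Finset.mem_singleton, forall_eq_or_imp,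
    forall_eq, ite_eq_left_iff, zero_ne_one, imp_false, not_not]
  omega

theorem epsval_pair_eq_zero_iff :
    epsval χ {x, y} = 0 ↔ (dotZ χ x).natAbs ≠ (dotZ χ y).natAbs := by
  rw [ne_eq, ← epsval_pair_eq_one_iff, epsval]
  split_ifs <;> simp

theorem badCone_pair : badCone χ {x, y} ↔ dotZ χ x * dotZ χ y < 0 := by
  rcases eq_or_ne x y with rfl | hxy
  · simp [badCone, (mul_self_nonneg (dotZ χ x)).not_gt]
  · simp [badCone, Finset.card_pair hxy, Finset.prod_pair hxy]

theorem not_badCone_pair_add_of_natAbs_eq (hbad : badCone χ {x, y})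
    (heq : (dotZ χ x).natAbs = (dotZ χ y).natAbs) (w : Fin n → ℤ) :
    ¬ badCone χ {x + y, w} := by
  zify at heq
  have hzero := add_eq_zero_of_abs_eq_of_mul_neg heq (badCone_pair.mp hbad)
  rw [badCone_pair, dotZ_add, hzero, zero_mul]
  exact lt_irrefl 0

theorem natAbs_dotZ_lt_of_lexLe_Pval (hlt : (dotZ χ y).natAbs < (dotZ χ x).natAbs)
    (hle : lexLe (Pval χ {x, w}) (Pval χ {x, y})) :
    (dotZ χ w).natAbs < (dotZ χ x).natAbs := by
  have heps : epsval χ {x, y} = 0 := epsval_pair_eq_zero_iff.mpr hlt.ne'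
  simp only [lexLe, Pval, heps, Nat.le_zero, epsval_pair_eq_zero_iff, Mval_pair] at hle
  omega

theorem Mval_pair_add_lt_of_natAbs_lt (hbad : badCone χ {x, y})
    (hlt : (dotZ χ y).natAbs < (dotZ χ x).natAbs)
    (hmax : badCone χ {x, w} → lexLe (Pval χ {x, w}) (Pval χ {x, y}))
    (hnew : badCone χ {x + y, w}) :
    Mval χ {x + y, w} < Mval χ {x, y} := by
  have hadd : (dotZ χ (x + y)).natAbs < max (dotZ χ x).natAbs (dotZ χ y).natAbs := by
    zify
    rw [dotZ_add]
    exact abs_add_lt_max_abs_of_mul_neg (badCone_pair.mp hbad)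
  have hxw : badCone χ {x, w} := by
    rw [badCone_pair, dotZ_add] at hnew
    exact badCone_pair.mpr (mul_neg_of_add_mul_neg (by zify at hlt; exact hlt) hnew)
  have hw : (dotZ χ w).natAbs < (dotZ χ x).natAbs := natAbs_dotZ_lt_of_lexLe_Pval hlt (hmax hxw)
  rw [Mval_pair, Mval_pair]
  exact max_lt hadd (lt_max_of_lt_left hw)

theorem Mval_pair_add_lt (hbad : badCone χ {x, y})
    (hmax_left : badCone χ {x, w} → lexLe (Pval χ {x, w}) (Pval χ {x, y}))
    (hmax_right : badCone χ {y, w} → lexLe (Pval χ {y, w}) (Pval χ {x, y}))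
    (hnew : badCone χ {x + y, w}) :
    Mval χ {x + y, w} < Mval χ {x, y} := by
  rcases lt_trichotomy (dotZ χ x).natAbs (dotZ χ y).natAbs with hlt | heq | hgt
  · rw [Finset.pair_comm x y] at hbad hmax_right ⊢
    rw [add_comm x y] at hnew ⊢
    exact Mval_pair_add_lt_of_natAbs_lt hbad hlt hmax_right hnew
  · exact absurd hnew (not_badCone_pair_add_of_natAbs_eq hbad heq w)
  · exact Mval_pair_add_lt_of_natAbs_lt hbad hgt hmax_left hnew

end TwoDimensionalCones

section BadCones

variable {n : ℕ} {Δ : Finset (Finset (Fin n → ℤ))} {χ e1 e2 : Fin n → ℤ}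

theorem filter_badCone_stellar_eq_erase (hΔ : IsLowerSet (Δ : Set (Finset (Fin n → ℤ))))
    (hbad : badCone χ {e1, e2}) (heps : epsval χ {e1, e2} = 1) :
    (stellar Δ e1 e2).filter (fun s => badCone χ s) =
      (Δ.filter (fun s => badCone χ s)).erase {e1, e2} := by
  ext τ
  simp only [Finset.mem_filter, Finset.mem_erase]
  constructor
  · rintro ⟨hτ, hτbad⟩
    rcases mem_or_eq_pair_of_mem_stellar hΔ hτ hτbad.1 with ⟨hτΔ, hne⟩ | ⟨w, rfl, -, -⟩
    · exact ⟨hne, hτΔ, hτbad⟩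
    · exact absurd hτbad (not_badCone_pair_add_of_natAbs_eq hbad (epsval_pair_eq_one_iff.mp heps) w)
  · rintro ⟨hne, hτΔ, hτbad⟩
    exact ⟨mem_stellar_of_card_le hτΔ (hτbad.1.trans hbad.1.symm).le hne, hτbad⟩

theorem mem_or_Mval_lt_of_mem_stellar (hΔ : IsLowerSet (Δ : Set (Finset (Fin n → ℤ))))
    (hbad : badCone χ {e1, e2})
    (hmax : ∀ τ ∈ Δ, badCone χ τ → lexLe (Pval χ τ) (Pval χ {e1, e2}))
    {τ : Finset (Fin n → ℤ)} (hτ : τ ∈ stellar Δ e1 e2) (hτbad : badCone χ τ) :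
    (τ ∈ Δ ∧ τ ≠ {e1, e2}) ∨ Mval χ τ < Mval χ {e1, e2} := by
  rcases mem_or_eq_pair_of_mem_stellar hΔ hτ hτbad.1 with hold | ⟨w, rfl, h1w, h2w⟩
  · exact Or.inl hold
  · exact Or.inr (Mval_pair_add_lt hbad (hmax _ h1w) (hmax _ h2w) hτbad)

theorem lexLe_Pval_of_mem_stellar (hΔ : IsLowerSet (Δ : Set (Finset (Fin n → ℤ))))
    (hbad : badCone χ {e1, e2})
    (hmax : ∀ τ ∈ Δ, badCone χ τ → lexLe (Pval χ τ) (Pval χ {e1, e2}))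
    {τ : Finset (Fin n → ℤ)} (hτ : τ ∈ stellar Δ e1 e2) (hτbad : badCone χ τ) :
    lexLe (Pval χ τ) (Pval χ {e1, e2}) := by
  rcases mem_or_Mval_lt_of_mem_stellar hΔ hbad hmax hτ hτbad with ⟨hτΔ, -⟩ | hlt
  · exact hmax τ hτΔ hτbad
  · exact Or.inl hlt

theorem card_filter_Pval_eq_stellar_lt (hΔ : IsLowerSet (Δ : Set (Finset (Fin n → ℤ))))
    (hσ : {e1, e2} ∈ Δ) (hbad : badCone χ {e1, e2})
    (hmax : ∀ τ ∈ Δ, badCone χ τ → lexLe (Pval χ τ) (Pval χ {e1, e2})) :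
    ((stellar Δ e1 e2).filter (fun s => badCone χ s ∧ Pval χ s = Pval χ {e1, e2})).card <
      (Δ.filter (fun s => badCone χ s ∧ Pval χ s = Pval χ {e1, e2})).card := by
  have hold : ∀ τ ∈ stellar Δ e1 e2, badCone χ τ → Pval χ τ = Pval χ {e1, e2} →
      τ ∈ Δ ∧ τ ≠ {e1, e2} := fun τ hτ hτbad hP =>
    (mem_or_Mval_lt_of_mem_stellar hΔ hbad hmax hτ hτbad).resolve_right
      (congrArg Prod.fst hP).not_lt
  refine Finset.card_lt_card ((Finset.ssubset_iff_of_subset fun τ hτ => ?_).mpr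
    ⟨{e1, e2}, Finset.mem_filter.mpr ⟨hσ, hbad, rfl⟩, fun hmem => ?_⟩)
  · obtain ⟨hτ, hτbad, hP⟩ := Finset.mem_filter.mp hτ
    exact Finset.mem_filter.mpr ⟨(hold τ hτ hτbad hP).1, hτbad, hP⟩
  · exact (hold _ (Finset.mem_filter.mp hmem).1 hbad rfl).2 rfl

end BadCones

theorem stmt13_general {n : ℕ} {Δ : Finset (Finset (Fin n → ℤ))}
    (hΔ : IsLowerSet (Δ : Set (Finset (Fin n → ℤ)))) {χ e1 e2 : Fin n → ℤ}
    (hσ : {e1, e2} ∈ Δ) (hbad : badCone χ {e1, e2})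
    (hmax : ∀ τ ∈ Δ, badCone χ τ → lexLe (Pval χ τ) (Pval χ {e1, e2})) :
    (epsval χ {e1, e2} = 1 →
      (stellar Δ e1 e2).filter (fun s => badCone χ s) =
        (Δ.filter (fun s => badCone χ s)).erase {e1, e2}) ∧
    (∀ τ ∈ stellar Δ e1 e2, badCone χ τ → lexLe (Pval χ τ) (Pval χ {e1, e2})) ∧
    ((stellar Δ e1 e2).filter (fun s => badCone χ s ∧ Pval χ s = Pval χ {e1, e2})).card <
      (Δ.filter (fun s => badCone χ s ∧ Pval χ s = Pval χ {e1, e2})).card :=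
  ⟨filter_badCone_stellar_eq_erase hΔ hbad,
    fun _ => lexLe_Pval_of_mem_stellar hΔ hbad hmax,
    card_filter_Pval_eq_stellar_lt hΔ hσ hbad hmax⟩

/-- Lemma 4.3: let `σ = C(e^1, e^2)` be a bad two dimensional cone of the smooth fan `Δ` with
`P_Δ(σ)` lexicographically maximal among bad two dimensional cones. If `ε_σ = 1`, the bad two
dimensional cones of `_σΔ` are exactly those of `Δ` with `σ` removed. If `ε_σ = 0`, every bad
two dimensional cone of `_σΔ` has `P`-value lexicographically at most `(M_σ, ε_σ)`, and the
number of bad cones attaining `(M_σ, ε_σ)` strictly decreases. -/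
theorem stmt13 {n : ℕ} (Δ : Finset (Finset (Fin n → ℤ))) (hΔ : IsSmoothFan Δ)
    (χ e1 e2 : Fin n → ℤ) (hne : e1 ≠ e2)
    (hσ : ({e1, e2} : Finset (Fin n → ℤ)) ∈ Δ)
    (hbad : badCone χ ({e1, e2} : Finset (Fin n → ℤ)))
    (hmax : ∀ τ ∈ Δ, badCone χ τ →
      lexLe (Pval χ τ) (Pval χ ({e1, e2} : Finset (Fin n → ℤ)))) :
    (epsval χ ({e1, e2} : Finset (Fin n → ℤ)) = 1 →
      (stellar Δ e1 e2).filter (fun s => badCone χ s) =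
        (Δ.filter (fun s => badCone χ s)).erase ({e1, e2} : Finset (Fin n → ℤ))) ∧
    (epsval χ ({e1, e2} : Finset (Fin n → ℤ)) = 0 →
      (∀ τ ∈ stellar Δ e1 e2, badCone χ τ →
        lexLe (Pval χ τ) (Pval χ ({e1, e2} : Finset (Fin n → ℤ)))) ∧
      ((stellar Δ e1 e2).filter (fun s => badCone χ s ∧
          Pval χ s = Pval χ ({e1, e2} : Finset (Fin n → ℤ)))).card <
        (Δ.filter (fun s => badCone χ s ∧
          Pval χ s = Pval χ ({e1, e2} : Finset (Fin n → ℤ)))).card) := by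
  have hface : IsLowerSet (Δ : Set (Finset (Fin n → ℤ))) := fun s t hts hs => hΔ.2.2.1 s hs t hts
  exact (stmt13_general hface hσ hbad hmax).imp_right fun h _ => h
end
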